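/- arXiv:2407.11530 — 2 statements merged into one kernel-verified Lean document; each statement's English description precedes it below -/
import Mathlib

section
/- Let θ ∈ (0,1), μ₁ > 0, τ > 0, C₂ ≥ 0, b ≥ 0, let (a_n)_{n∈ℕ} be nonnegative reals, and let (t_n)_{n∈ℕ} be reals with t_n ≥ nτ for all n. Assume a_{n+1} ≤ C₂ e^{−μ₁ t_n} b + θ a_n for all n ∈ ℕ. Fix ε ∈ (0, μ₁) and define θ₁ := max{θ, e^{−μ₁τ}} if θ ≠ e^{−μ₁τ}, and θ₁ := e^{−(μ₁−ε)τ} if θ = e^{−μ₁τ}. Then there exists a constant D > 0 such that for all n ∈ ℕ, a_{n+1} ≤ C₂ D θ₁^{n+1} b + θ^{n+1} a₀. -/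
/-!
Unrolling the recursion with forcing `q ^ n`, where `q = exp (-μ₁ * τ)`, produces the homogeneous
sum `∑ i < n, q ^ i * θ ^ (n - 1 - i)`, which is symmetric in `q` and `θ`. Hence any `r ≥ max θ q`
with `r > min θ q` controls it: replace the larger base by `r` and sum the geometric series, at the
cost of the constant `(r - min θ q)⁻¹`. When `θ ≠ q` the choice `r = max θ q` is admissible; the
resonant case `θ = q` has to enlarge the rate, and `exp (-(μ₁ - ε) * τ) > q` does so.
-/

open Finset

section GeometricForcing

theorem le_pow_mul_add_mul_geom_sum₂ {R : Type*} [CommSemiring R] [PartialOrder R]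
    [IsOrderedRing R] {u : ℕ → R} {x y c : R} (hy : 0 ≤ y)
    (hu : ∀ n, u (n + 1) ≤ y * u n + c * x ^ n) (n : ℕ) :
    u n ≤ y ^ n * u 0 + c * ∑ i ∈ range n, x ^ i * y ^ (n - 1 - i) := by
  have gronwall := discrete_gronwall_prod_general (n₀ := 0) (c := fun _ ↦ y)
    (fun n _ ↦ hu n) (fun _ _ ↦ hy) n.zero_le
  simpa only [prod_const, Nat.card_Ico, Nat.sub_zero, Nat.Ico_zero_eq_range, card_range,
    mul_comm (u 0), mul_assoc, ← mul_sum, Nat.sub_add_eq, Nat.sub_right_comm _ _ 1] using gronwall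

variable {K : Type*} [Field K] [LinearOrder K] [IsStrictOrderedRing K] {x y r : K}

theorem geom_sum₂_le_pow_div_sub (hx : 0 ≤ x) (hy : 0 ≤ y) (hxr : x ≤ r) (hyr : y < r) (n : ℕ) :
    ∑ i ∈ range n, x ^ i * y ^ (n - 1 - i) ≤ r ^ n / (r - y) :=
  calc ∑ i ∈ range n, x ^ i * y ^ (n - 1 - i)
      ≤ ∑ i ∈ range n, r ^ i * y ^ (n - 1 - i) := by gcongr
    _ = (r ^ n - y ^ n) / (r - y) := geom₂_sum hyr.ne' n
    _ ≤ r ^ n / (r - y) :=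
      div_le_div_of_nonneg_right (sub_le_self _ (pow_nonneg hy n)) (sub_nonneg.mpr hyr.le)

theorem geom_sum₂_le_pow_div_sub_min (hx : 0 ≤ x) (hy : 0 ≤ y) (hmax : max x y ≤ r)
    (hmin : min x y < r) (n : ℕ) :
    ∑ i ∈ range n, x ^ i * y ^ (n - 1 - i) ≤ r ^ n / (r - min x y) := by
  obtain ⟨hxr, hyr⟩ := max_le_iff.mp hmax
  rcases le_total x y with hxy | hyx
  · rw [min_eq_left hxy] at hmin ⊢
    rw [geom_sum₂_comm]
    exact geom_sum₂_le_pow_div_sub hy hx hyr hmin n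
  · rw [min_eq_right hyx] at hmin ⊢
    exact geom_sum₂_le_pow_div_sub hx hy hxr hmin n

theorem le_pow_mul_add_mul_pow_div_sub_min {u : ℕ → K} {c : K} (hx : 0 ≤ x) (hy : 0 ≤ y)
    (hc : 0 ≤ c) (hmax : max x y ≤ r) (hmin : min x y < r)
    (hu : ∀ n, u (n + 1) ≤ y * u n + c * x ^ n) (n : ℕ) :
    u n ≤ y ^ n * u 0 + c * (r ^ n / (r - min x y)) :=
  (le_pow_mul_add_mul_geom_sum₂ hy hu n).trans <| by
    gcongr
    exact geom_sum₂_le_pow_div_sub_min hx hy hmax hmin n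

end GeometricForcing

section Rate

variable {α : Type*} [LinearOrder α] {x y z : α} [Decidable (x = y)]

theorem max_le_ite_eq_max (hyz : y ≤ z) : max x y ≤ if x = y then z else max x y := by
  split_ifs with hxy
  · rwa [hxy, max_self]
  · exact le_rfl

theorem min_lt_ite_eq_max (hyz : y < z) : min x y < if x = y then z else max x y := by
  split_ifs with hxy
  · rwa [hxy, min_self]
  · exact min_lt_max.mpr hxy

end Rate

theorem exp_neg_mul_le_exp_neg_mul_pow {μ τ s : ℝ} {n : ℕ} (hμ : 0 ≤ μ) (hs : n * τ ≤ s) :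
    Real.exp (-μ * s) ≤ Real.exp (-μ * τ) ^ n := by
  rw [← Real.exp_nat_mul, Real.exp_le_exp]
  calc -μ * s ≤ -μ * (n * τ) := mul_le_mul_of_nonpos_left hs (neg_nonpos.mpr hμ)
    _ = n * (-μ * τ) := by ring

theorem exp_neg_mul_lt_exp_neg_sub_mul {μ τ ε : ℝ} (hτ : 0 < τ) (hε : 0 < ε) :
    Real.exp (-μ * τ) < Real.exp (-(μ - ε) * τ) := by
  gcongr
  exact sub_lt_self μ hε

theorem stmt_10_general (θ μ₁ τ ε : ℝ) (hθ : 0 ≤ θ) (hμ₁ : 0 ≤ μ₁) (hτ : 0 < τ) (hε : 0 < ε)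
    (θ₁ : ℝ)
    (hθ₁ : θ₁ = if θ = Real.exp (-μ₁ * τ) then Real.exp (-(μ₁ - ε) * τ)
      else max θ (Real.exp (-μ₁ * τ))) :
    ∃ D > 0, ∀ (C₂ b : ℝ) (a t : ℕ → ℝ), 0 ≤ C₂ → 0 ≤ b → (∀ n : ℕ, (n : ℝ) * τ ≤ t n) →
      (∀ n, a (n + 1) ≤ C₂ * Real.exp (-μ₁ * t n) * b + θ * a n) →
      ∀ n, a n ≤ C₂ * D * θ₁ ^ n * b + θ ^ n * a 0 := by
  set q := Real.exp (-μ₁ * τ)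
  have rate_gt : q < Real.exp (-(μ₁ - ε) * τ) := exp_neg_mul_lt_exp_neg_sub_mul hτ hε
  have hmax : max q θ ≤ θ₁ := by rw [hθ₁, max_comm]; exact max_le_ite_eq_max rate_gt.le
  have hmin : min q θ < θ₁ := by rw [hθ₁, min_comm]; exact min_lt_ite_eq_max rate_gt
  refine ⟨(θ₁ - min q θ)⁻¹, inv_pos.mpr (sub_pos.mpr hmin), fun C₂ b a t hC₂ hb ht hrec n ↦ ?_⟩
  have geometric_rec (n : ℕ) : a (n + 1) ≤ θ * a n + C₂ * b * q ^ n :=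
    calc a (n + 1) ≤ C₂ * Real.exp (-μ₁ * t n) * b + θ * a n := hrec n
      _ ≤ C₂ * q ^ n * b + θ * a n := by
        gcongr
        exact exp_neg_mul_le_exp_neg_mul_pow hμ₁ (ht n)
      _ = θ * a n + C₂ * b * q ^ n := by ring
  calc a n ≤ θ ^ n * a 0 + C₂ * b * (θ₁ ^ n / (θ₁ - min q θ)) :=
        le_pow_mul_add_mul_pow_div_sub_min (Real.exp_nonneg _) hθ (mul_nonneg hC₂ hb) hmax hmin
          geometric_rec n
    _ = C₂ * (θ₁ - min q θ)⁻¹ * θ₁ ^ n * b + θ ^ n * a 0 := by ring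

/-- unified geometric decay bound for the recursion
`a_{n+1} ≤ C₂ e^{−μ₁ t_n} b + θ a_n` with `t_n ≥ nτ`: with
`θ₁ = max{θ, e^{−μ₁τ}}` if `θ ≠ e^{−μ₁τ}` and `θ₁ = e^{−(μ₁−ε)τ}` otherwise,
there is `D > 0` with `a_{n+1} ≤ C₂ D θ₁^{n+1} b + θ^{n+1} a₀`. -/
theorem stmt_10 (θ μ₁ τ C₂ b ε : ℝ) (hθ : θ ∈ Set.Ioo (0 : ℝ) 1)
    (hμ₁ : 0 < μ₁) (hτ : 0 < τ) (hC₂ : 0 ≤ C₂) (hb : 0 ≤ b)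
    (a : ℕ → ℝ) (ha : ∀ n, 0 ≤ a n) (t : ℕ → ℝ) (ht : ∀ n : ℕ, (n : ℝ) * τ ≤ t n)
    (hrec : ∀ n, a (n + 1) ≤ C₂ * Real.exp (-μ₁ * t n) * b + θ * a n)
    (hε : ε ∈ Set.Ioo 0 μ₁)
    (θ₁ : ℝ)
    (hθ₁ : θ₁ = if θ = Real.exp (-μ₁ * τ) then Real.exp (-(μ₁ - ε) * τ)
      else max θ (Real.exp (-μ₁ * τ))) :
    ∃ D > 0, ∀ n, a (n + 1) ≤ C₂ * D * θ₁ ^ (n + 1) * b + θ ^ (n + 1) * a 0 :=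
  let ⟨D, hD, bound⟩ := stmt_10_general θ μ₁ τ ε hθ.1.le hμ₁.le hτ hε.1 θ₁ hθ₁
  ⟨D, hD, fun n ↦ bound C₂ b a t hC₂ hb ht hrec (n + 1)⟩
end

section
/- Let θ ∈ (0,1), μ₁ > 0, 0 < τ ≤ T, and C₂ ≥ 0, with θ ≠ e^{−μ₁τ}, and set θ₁ := max{θ, e^{−μ₁τ}} and μ₂ := T^{−1} log(θ₁^{−1}). Let b ≥ 0, let (a_n)_{n∈ℕ} be nonnegative reals, and let (t_n)_{n∈ℕ} be reals with t₀ = 0 and τ ≤ t_{n+1} − t_n ≤ T for all n. Assume a_{n+1} ≤ C₂ e^{−μ₁ t_n} b + θ a_n for all n ∈ ℕ. Then there exists a constant D ≥ 1 such that a_n ≤ D e^{−μ₂ t_n} (a₀ + b) for all n ∈ ℕ. -/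
/-!
Since `t n ≥ n τ`, the observer term decays at least like `ρ ^ n` with `ρ = exp (-μ₁ τ)`, so the
recursion becomes `a (n + 1) ≤ θ a n + C₂ b ρ ^ n`. Iterating it produces the two-variable geometric
sum `∑ ρ ^ i θ ^ (n - 1 - i) = (ρ ^ n - θ ^ n) / (ρ - θ)`, and away from the resonance `ρ = θ` this
is at most a constant times `max θ ρ ^ n = θ₁ ^ n`. The rate `μ₂` is the one with
`exp (-μ₂ T) = θ₁`, so `t n ≤ n T` turns geometric decay in `n` into exponential decay in `t n`.
-/

open Finset Real

section GeometricForcing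

theorem le_pow_mul_add_geom_sum₂ {R : Type*} [CommSemiring R] [PartialOrder R] [IsOrderedRing R]
    {u : ℕ → R} {θ ρ c : R} (hθ : 0 ≤ θ) (hu : ∀ n, u (n + 1) ≤ θ * u n + c * ρ ^ n) (n : ℕ) :
    u n ≤ θ ^ n * u 0 + c * ∑ i ∈ range n, ρ ^ i * θ ^ (n - 1 - i) := by
  have gronwall := discrete_gronwall_prod_general (n₀ := 0) (c := fun _ ↦ θ)
    (fun n _ ↦ hu n) (fun _ _ ↦ hθ) n.zero_le
  simpa only [prod_const, Nat.card_Ico, Nat.Ico_zero_eq_range, card_range, mul_comm (u 0), mul_sum,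
    mul_assoc, Nat.sub_sub, add_comm 1] using gronwall

variable {K : Type*} [Field K] [LinearOrder K] [IsStrictOrderedRing K]

theorem geom_sum₂_le_max_pow_div {x y : K} (hx : 0 ≤ x) (hy : 0 ≤ y) (hxy : x ≠ y) (n : ℕ) :
    ∑ i ∈ range n, x ^ i * y ^ (n - 1 - i) ≤ max x y ^ n / |x - y| := by
  have pow_x_le : x ^ n ≤ max x y ^ n := by gcongr; exact le_max_left x y
  have pow_y_le : y ^ n ≤ max x y ^ n := by gcongr; exact le_max_right x y
  calc ∑ i ∈ range n, x ^ i * y ^ (n - 1 - i) = (x ^ n - y ^ n) / (x - y) := geom₂_sum hxy n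
    _ ≤ |x ^ n - y ^ n| / |x - y| := (le_abs_self _).trans_eq (abs_div _ _)
    _ ≤ max x y ^ n / |x - y| := by
      gcongr
      exact abs_sub_le_of_nonneg_of_le (pow_nonneg hx n) pow_x_le (pow_nonneg hy n) pow_y_le

theorem le_mul_max_pow_of_le_mul_add_pow {u : ℕ → K} {θ ρ c : K} (hθ : 0 ≤ θ) (hρ : 0 ≤ ρ)
    (hne : θ ≠ ρ) (hc : 0 ≤ c) (hu₀ : 0 ≤ u 0) (hu : ∀ n, u (n + 1) ≤ θ * u n + c * ρ ^ n) (n : ℕ) :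
    u n ≤ (u 0 + c / |ρ - θ|) * max θ ρ ^ n := by
  calc u n ≤ θ ^ n * u 0 + c * ∑ i ∈ range n, ρ ^ i * θ ^ (n - 1 - i) :=
        le_pow_mul_add_geom_sum₂ hθ hu n
    _ ≤ max θ ρ ^ n * u 0 + c * (max ρ θ ^ n / |ρ - θ|) := by
      gcongr
      · exact le_max_left θ ρ
      · exact geom_sum₂_le_max_pow_div hρ hθ hne.symm n
    _ = (u 0 + c / |ρ - θ|) * max θ ρ ^ n := by rw [max_comm ρ θ]; ring

end GeometricForcing

section ExponentialSampling

variable {μ δ : ℝ} {t : ℕ → ℝ}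

theorem exp_neg_mul_le_pow_of_le_sub (hμ : 0 ≤ μ) (ht : ∀ n, δ ≤ t (n + 1) - t n) (n : ℕ) :
    exp (-μ * t n) ≤ exp (-μ * δ) ^ n * exp (-μ * t 0) := by
  refine le_geom (u := fun k ↦ exp (-μ * t k)) (exp_nonneg _) n fun k _ ↦ ?_
  rw [← exp_add, exp_le_exp]
  linarith [mul_le_mul_of_nonneg_left (ht k) hμ]

theorem pow_le_exp_neg_mul_of_sub_le (hμ : 0 ≤ μ) (ht : ∀ n, t (n + 1) - t n ≤ δ) (n : ℕ) :
    exp (-μ * δ) ^ n * exp (-μ * t 0) ≤ exp (-μ * t n) := by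
  refine geom_le (u := fun k ↦ exp (-μ * t k)) (exp_nonneg _) n fun k _ ↦ ?_
  rw [← exp_add, exp_le_exp]
  linarith [mul_le_mul_of_nonneg_left (ht k) hμ]

theorem exp_neg_inv_mul_log_inv_mul {s x : ℝ} (hs : s ≠ 0) (hx : 0 < x) :
    exp (-(s⁻¹ * log x⁻¹) * s) = x := by
  have exponent_eq : -(s⁻¹ * log x⁻¹) * s = log x := by
    rw [log_inv]
    field_simp
  rw [exponent_eq, exp_log hx]

theorem pow_le_exp_neg_inv_mul_log_inv_mul {x : ℝ} (hδ : 0 < δ) (hx₀ : 0 < x) (hx₁ : x ≤ 1)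
    (ht : ∀ n, t (n + 1) - t n ≤ δ) (n : ℕ) :
    x ^ n * exp (-(δ⁻¹ * log x⁻¹) * t 0) ≤ exp (-(δ⁻¹ * log x⁻¹) * t n) := by
  have rate_nonneg : 0 ≤ δ⁻¹ * log x⁻¹ :=
    mul_nonneg (inv_nonneg.2 hδ.le) (log_nonneg (one_le_inv_iff₀.2 ⟨hx₀, hx₁⟩))
  simpa only [exp_neg_inv_mul_log_inv_mul hδ.ne' hx₀] using
    pow_le_exp_neg_mul_of_sub_le rate_nonneg ht n

end ExponentialSampling

/-- discrete-time skeleton of the main theorem.  With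
`θ ∈ (0,1)`, `θ ≠ e^{−μ₁τ}`, `θ₁ = max{θ, e^{−μ₁τ}}`,
`μ₂ = T⁻¹ log(θ₁⁻¹)`, concatenation times with `t₀ = 0` and
`τ ≤ t_{n+1} − t_n ≤ T`, and the recursion
`a_{n+1} ≤ C₂ e^{−μ₁ t_n} b + θ a_n`, there is `D ≥ 1` with
`a_n ≤ D e^{−μ₂ t_n} (a₀ + b)` for all `n`. -/
theorem stmt_12 (θ μ₁ τ T C₂ b : ℝ) (hθ : θ ∈ Set.Ioo (0 : ℝ) 1)
    (hμ₁ : 0 < μ₁) (hτ : 0 < τ) (hτT : τ ≤ T) (hC₂ : 0 ≤ C₂)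
    (hθne : θ ≠ Real.exp (-μ₁ * τ)) (hb : 0 ≤ b)
    (θ₁ μ₂ : ℝ) (hθ₁ : θ₁ = max θ (Real.exp (-μ₁ * τ)))
    (hμ₂ : μ₂ = T⁻¹ * Real.log θ₁⁻¹)
    (a : ℕ → ℝ) (ha : ∀ n, 0 ≤ a n) (t : ℕ → ℝ) (ht0 : t 0 = 0)
    (htlow : ∀ n : ℕ, τ ≤ t (n + 1) - t n) (htup : ∀ n : ℕ, t (n + 1) - t n ≤ T)
    (hrec : ∀ n, a (n + 1) ≤ C₂ * Real.exp (-μ₁ * t n) * b + θ * a n) :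
    ∃ D ≥ 1, ∀ n, a n ≤ D * Real.exp (-μ₂ * t n) * (a 0 + b) := by
  obtain ⟨hθ_pos, hθ_lt_one⟩ := hθ
  have hθ₁_pos : 0 < θ₁ := hθ₁ ▸ lt_max_of_lt_left hθ_pos
  have hθ₁_le_one : θ₁ ≤ 1 :=
    hθ₁ ▸ max_le hθ_lt_one.le (exp_le_one_iff.2 (by linarith [mul_pos hμ₁ hτ]))
  have observer_decay (n : ℕ) : exp (-μ₁ * t n) ≤ exp (-μ₁ * τ) ^ n := by
    simpa [ht0] using exp_neg_mul_le_pow_of_le_sub hμ₁.le htlow n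
  have pow_le_exp (n : ℕ) : θ₁ ^ n ≤ exp (-μ₂ * t n) := by
    simpa [ht0, hμ₂] using
      pow_le_exp_neg_inv_mul_log_inv_mul (hτ.trans_le hτT) hθ₁_pos hθ₁_le_one htup n
  have geometric_rec (n : ℕ) : a (n + 1) ≤ θ * a n + C₂ * b * exp (-μ₁ * τ) ^ n := by
    linarith [hrec n, mul_le_mul_of_nonneg_left (observer_decay n) (mul_nonneg hC₂ hb)]
  set κ := C₂ / |exp (-μ₁ * τ) - θ|
  have hκ : 0 ≤ κ := by positivity
  refine ⟨1 + κ, by linarith, fun n ↦ ?_⟩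
  have ha₀ := ha 0
  calc a n ≤ (a 0 + C₂ * b / |exp (-μ₁ * τ) - θ|) * θ₁ ^ n :=
        hθ₁ ▸ le_mul_max_pow_of_le_mul_add_pow hθ_pos.le (exp_nonneg _) hθne
          (mul_nonneg hC₂ hb) ha₀ geometric_rec n
    _ = (a 0 + κ * b) * θ₁ ^ n := by rw [mul_div_right_comm]
    _ ≤ (1 + κ) * (a 0 + b) * exp (-μ₂ * t n) :=
      mul_le_mul (by linarith [mul_nonneg hκ ha₀]) (pow_le_exp n) (by positivity) (by positivity)
    _ = (1 + κ) * exp (-μ₂ * t n) * (a 0 + b) := mul_right_comm _ _ _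
end
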